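/- Let k be an algebraically closed field of characteristic ≠ 2, let n ≥ 2, and let r ≥ n(n+1)/2 − 1. Then there exists a dense Zariski-open subset U of (Symm_n(k))^{r+1} such that for every A = (A_0,…,A_r) ∈ U, every tuple B = (B_0,…,B_r) ∈ (Symm_n(k))^{r+1} for which det(x_0 B_0 + … + x_r B_r) is a nonzero scalar multiple of det(x_0 A_0 + … + x_r A_r) is equivalent to A, i.e., there exists an invertible n×n matrix g with B_i = gᵀ A_i g for every i = 0,…,r. In other words, the number μ(r,n) of inequivalent symmetric presentations of a general symmetric determinantal hypersurface of degree n in P^r equals 1 when r ≥ n(n+1)/2 − 1. -/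

import Mathlib

/-!
If the matrices `A i` span the space of symmetric matrices, which is the nonvanishing of some
minor of the tuple because `r + 1` is at least `n (n + 1) / 2`, then every symmetric `B` with
`P_B = c P_A` is equivalent to `A`.

Write `A(x) = ∑ x i • A i` and likewise `B(x)`, so that `det B(x) = c det A(x)`. No nonzero
symmetric `T` satisfies `det (S + T) = det S` for all symmetric `S` (`eq_zero_of_det_add`); hence
`ker B ⊆ ker A`, and comparing dimensions gives `B = φ ∘ A` for a linear bijection `φ` of the
space of symmetric matrices with `det (φ S) = c det S` (`equivalent_of_span`).

It remains to see that such a `φ` is a congruence. The squares `v vᵀ` are exactly the symmetric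
`T` for which `t ↦ det (S + t T)` is affine for all symmetric `S`
(`exists_det_pencil_eq_monomial`, `det_add_smul_vecMulVec_affine`), so `φ` maps squares to squares
(`map_square_of_det_preserver`). Write `φ (e_i e_iᵀ) = f_i f_iᵀ`; the `f_i` form a basis because
`φ 1` is invertible, and after a congruence `φ` fixes all `e_i e_iᵀ`. The vanishing of the
`2 × 2` minors of `φ ((e_i + t e_j) (e_i + t e_j)ᵀ)` for all `t` then forces
`φ (E_ij + E_ji)` to be a multiple of `E_ij + E_ji`. Thus `φ` is entrywise multiplication by the
image of the all-ones matrix, which is a square `w wᵀ`, and `φ S = diag(w) S diag(w)`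
(`normalized_square_preserver`, `square_preserver`).
-/

open Matrix

/-- The generalized characteristic polynomial
`P_A(x_0, …, x_r) = det(x_0 A_0 + … + x_r A_r)` of an `(r+1)`-tuple of `n × n` matrices. -/
noncomputable def genCharPoly {k : Type*} [CommRing k] {n r : ℕ}
    (A : Fin (r + 1) → Matrix (Fin n) (Fin n) k) : MvPolynomial (Fin (r + 1)) k :=
  Matrix.det (∑ i : Fin (r + 1), (MvPolynomial.X i : MvPolynomial (Fin (r + 1)) k) •
    ((A i).map MvPolynomial.C : Matrix (Fin n) (Fin n) (MvPolynomial (Fin (r + 1)) k)))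

section Helpers

/-! ### Pencils of symmetric matrices -/

variable {k : Type*} [Field k] {n : ℕ}

/-- Diagonalization of a symmetric matrix by congruence. -/
lemma exists_congruent_diagonal (h2 : (2 : k) ≠ 0) (T : Matrix (Fin n) (Fin n) k)
    (hT : T.IsSymm) : ∃ (Q : Matrix (Fin n) (Fin n) k) (d : Fin n → k),
      Q.det ≠ 0 ∧ T = Qᵀ * diagonal d * Q := by
  have : Invertible (2 : k) := invertibleOfNonzero h2
  obtain ⟨v', hv'⟩ := LinearMap.BilinForm.exists_orthogonal_basis
    (LinearMap.BilinForm.isSymm_iff.mp (Matrix.isSymm_toBilin'_iff_isSymm.mpr hT))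
  have e : Fin (Module.finrank k (Fin n → k)) ≃ Fin n := finCongr (by simp)
  set v := v'.reindex e with hvdef
  have hv : ∀ i j, i ≠ j → Matrix.toBilin' T (v i) (v j) = 0 := by
    intro i j hij
    have := hv' (i := e.symm i) (j := e.symm j) (by simpa using hij)
    simpa [hvdef] using this
  set P : Matrix (Fin n) (Fin n) k := (Pi.basisFun k (Fin n)).toMatrix v with hP
  have hdiag : Pᵀ * T * P = diagonal (fun i => (Pᵀ * T * P) i i) := by
    ext i j
    by_cases hij : i = j
    · subst hij; simp
    · rw [diagonal_apply_ne _ hij, ← hv i j hij, Matrix.toBilin'_apply']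
      rw [Matrix.mul_assoc, Matrix.mul_apply, dotProduct]
      refine Finset.sum_congr rfl fun a _ => ?_
      simp [hP, Module.Basis.toMatrix_apply, Matrix.mul_apply, mulVec, dotProduct]
  have hPu : IsUnit P.det := by
    rw [← Matrix.isUnit_iff_isUnit_det]
    have := (Pi.basisFun k (Fin n)).invertibleToMatrix v
    exact isUnit_of_invertible P
  refine ⟨P⁻¹, fun i => (Pᵀ * T * P) i i, (Matrix.isUnit_nonsing_inv_det P hPu).ne_zero, ?_⟩
  rw [← hdiag, Matrix.transpose_nonsing_inv]
  have hPt : IsUnit Pᵀ.det := by simpa using hPu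
  rw [Matrix.mul_assoc Pᵀ, Matrix.nonsing_inv_mul_cancel_left _ _ hPt,
    Matrix.mul_nonsing_inv_cancel_right _ _ hPu]

/-- A symmetric `T` of rank `ρ` lies in a pencil `S + t T` with determinant `c t ^ ρ`: once `T` is
diagonal, `S` is the complementary diagonal idempotent. Of `ρ = rank T` only the consequences for
`ρ = 0` and `ρ ≤ 1` are recorded. -/
lemma exists_det_pencil_eq_monomial [IsAlgClosed k] (h2 : (2 : k) ≠ 0)
    (T : Matrix (Fin n) (Fin n) k) (hT : T.IsSymm) :
    ∃ (S : Matrix (Fin n) (Fin n) k) (c : k) (ρ : ℕ), S.IsSymm ∧ c ≠ 0 ∧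
      (∀ t : k, (S + t • T).det = c * t ^ ρ) ∧ (ρ = 0 → T = 0) ∧
      (ρ ≤ 1 → ∃ v, T = vecMulVec v v) := by
  classical
  obtain ⟨Q, d, hQ, rfl⟩ := exists_congruent_diagonal h2 T hT
  have h0 : (Finset.univ.filter fun i => d i ≠ 0).card = 0 → d = 0 := by
    intro h
    funext i
    by_contra hi
    rw [Finset.card_eq_zero] at h
    have : i ∈ (Finset.univ.filter fun i => d i ≠ 0) := by simpa using hi
    simp [h] at this
  refine ⟨Qᵀ * diagonal (fun i => if d i = 0 then 1 else 0) * Q,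
    Q.det ^ 2 * ∏ i, (if d i = 0 then 1 else d i),
    (Finset.univ.filter fun i => d i ≠ 0).card, ?_, ?_, ?_, ?_, ?_⟩
  · simp [Matrix.IsSymm, Matrix.transpose_mul, Matrix.mul_assoc]
  · refine mul_ne_zero (pow_ne_zero _ hQ) (Finset.prod_ne_zero_iff.mpr fun i _ => ?_)
    split_ifs with h <;> simp [h]
  · intro t
    have : Qᵀ * diagonal (fun i => if d i = 0 then 1 else 0) * Q + t • (Qᵀ * diagonal d * Q)
        = Qᵀ * diagonal (fun i => (if d i = 0 then 1 else d i) * (if d i ≠ 0 then t else 1)) * Q := by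
      rw [← Matrix.smul_mul, ← Matrix.mul_smul, ← Matrix.add_mul, ← Matrix.mul_add,
        ← diagonal_smul, diagonal_add]
      congr 3
      funext i
      by_cases h : d i = 0 <;> simp [h, mul_comm]
    rw [this, det_mul, det_mul, det_transpose, det_diagonal, Finset.prod_mul_distrib,
      ← Finset.prod_filter, Finset.prod_const]
    ring
  · intro h
    simp [h0 h]
  · intro h
    rcases Nat.le_one_iff_eq_zero_or_eq_one.mp h with h | h
    · exact ⟨0, by simp [h0 h]⟩
    · obtain ⟨i, hi⟩ := Finset.card_eq_one.mp h
      have hd : ∀ j, j ≠ i → d j = 0 := by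
        intro j hj
        by_contra hne
        have : j ∈ (Finset.univ.filter fun i => d i ≠ 0) := by simpa using hne
        rw [hi] at this
        exact hj (by simpa using this)
      obtain ⟨s, hs⟩ := IsAlgClosed.exists_pow_nat_eq (d i) (n := 2) (by norm_num)
      refine ⟨s • Q i, ?_⟩
      ext a b
      rw [Matrix.mul_apply, Finset.sum_eq_single i]
      · simp [vecMulVec_apply, ← hs]; ring
      · intro j _ hj; simp [hd j hj]
      · simp

/-- The determinant of `S + t v vᵀ` is that of a bordered matrix whose first row is affine
in `t`. -/
lemma det_add_smul_vecMulVec_affine (S : Matrix (Fin n) (Fin n) k) (v : Fin n → k) :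
    ∃ a b : k, ∀ t : k, (S + t • vecMulVec v v).det = a + b * t := by
  let M : Matrix (Unit ⊕ Fin n) (Unit ⊕ Fin n) k := fromBlocks 1 0 (replicateCol Unit v) S
  refine ⟨M.det, (M.updateRow (Sum.inl ()) (Sum.elim 0 (-v))).det, fun t => ?_⟩
  have h1 : (fromBlocks 1 (replicateRow Unit (-(t • v))) (replicateCol Unit v) S).det
      = (S + t • vecMulVec v v).det := by
    rw [det_fromBlocks_one₁₁]
    congr 1
    ext i j
    simp [Matrix.mul_apply, vecMulVec_apply]
    ring
  have h2 : fromBlocks 1 (replicateRow Unit (-(t • v))) (replicateCol Unit v) S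
      = M.updateRow (Sum.inl ()) (M (Sum.inl ()) + t • (Sum.elim 0 (-v) : Unit ⊕ Fin n → k)) := by
    ext (i | i) (j | j) <;> simp [M, updateRow_apply]
  rw [← h1, h2, det_updateRow_add, det_updateRow_smul, updateRow_eq_self]
  ring

lemma coeffs_eq_zero [Infinite k] {a b c : k}
    (h : ∀ t : k, a * t + b * t ^ 2 + c * t ^ 3 = 0) : a = 0 ∧ b = 0 ∧ c = 0 := by
  have : (Polynomial.C a * Polynomial.X + Polynomial.C b * Polynomial.X ^ 2
      + Polynomial.C c * Polynomial.X ^ 3 : Polynomial k) = 0 :=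
    Polynomial.funext fun t => by simpa using h t
  refine ⟨?_, ?_, ?_⟩
  · simpa [Polynomial.coeff_X, Polynomial.coeff_X_pow] using congrArg (Polynomial.coeff · 1) this
  · simpa [Polynomial.coeff_X, Polynomial.coeff_X_pow] using congrArg (Polynomial.coeff · 2) this
  · simpa [Polynomial.coeff_X, Polynomial.coeff_X_pow] using congrArg (Polynomial.coeff · 3) this

lemma le_one_of_monomial_eq_affine [Infinite k] {a b c : k} {ρ : ℕ} (hc : c ≠ 0)
    (h : ∀ t : k, c * t ^ ρ = a + b * t) : ρ ≤ 1 := by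
  have : (Polynomial.C c * Polynomial.X ^ ρ : Polynomial k)
      = Polynomial.C b * Polynomial.X + Polynomial.C a :=
    Polynomial.funext fun t => by simpa [add_comm] using h t
  rw [← Polynomial.natDegree_C_mul_X_pow ρ c hc, this]
  exact Polynomial.natDegree_linear_le

lemma IsSymm_vecMulVec (v : Fin n → k) : (vecMulVec v v).IsSymm := by
  ext i j; simp [vecMulVec_apply, mul_comm]

/-! ### Linear maps preserving squares -/

/-- A linear map that sends squares `v vᵀ` to squares and fixes each `e_i e_iᵀ` is, on symmetric
matrices, congruence by a diagonal matrix. -/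
lemma normalized_square_preserver [Infinite k] (h2 : (2 : k) ≠ 0)
    (ψ : Matrix (Fin n) (Fin n) k →ₗ[k] Matrix (Fin n) (Fin n) k)
    (hsq : ∀ v, ∃ w, ψ (vecMulVec v v) = vecMulVec w w)
    (hdiag : ∀ i, ψ (single i i 1) = single i i 1) :
    ∃ w : Fin n → k, ∀ S : Matrix (Fin n) (Fin n) k, S.IsSymm →
      ψ S = diagonal w * S * diagonal w := by
  have hM : ∀ i j a b, i ≠ j → ¬ (a = i ∧ b = j) → ¬ (a = j ∧ b = i) →
      ψ (single i j 1 + single j i 1) a b = 0 := by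
    intro i j a b hij h1 h2
    set M := ψ (single i j 1 + single j i 1) with hMdef
    -- the image of the square of `e_i + t e_j`
    have hw : ∀ t : k, ∃ w, single i i 1 + t • M + t ^ 2 • single j j 1 = vecMulVec w w := by
      intro t
      obtain ⟨w, hw⟩ := hsq (Pi.single i 1 + t • Pi.single j 1)
      have : vecMulVec (Pi.single i 1 + t • Pi.single j 1) (Pi.single i 1 + t • Pi.single j 1)
          = single i i 1 + t • (single i j 1 + single j i 1)
            + t ^ 2 • (single j j 1 : Matrix (Fin n) (Fin n) k) := by
        simp only [add_vecMulVec, vecMulVec_add, smul_vecMulVec, vecMulVec_smul,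
          ← single_eq_single_vecMulVec_single]
        module
      rw [this, map_add, map_add, map_smul, map_smul, hdiag, hdiag] at hw
      exact ⟨w, hw⟩
    have hN : ∀ (t : k) (p q p' q' : Fin n),
        (single i i 1 + t • M + t ^ 2 • single j j 1 : Matrix (Fin n) (Fin n) k) p q *
        (single i i 1 + t • M + t ^ 2 • single j j 1 : Matrix (Fin n) (Fin n) k) p' q' =
        (single i i 1 + t • M + t ^ 2 • single j j 1 : Matrix (Fin n) (Fin n) k) p q' *
        (single i i 1 + t • M + t ^ 2 • single j j 1 : Matrix (Fin n) (Fin n) k) p' q := by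
      intro t p q p' q'
      obtain ⟨w, hw⟩ := hw t
      rw [hw]
      simp only [vecMulVec_apply]
      ring
    have hji := hij.symm
    have hoff : ∀ p q, p ≠ i → p ≠ j → q ≠ i → q ≠ j → M p q = 0 := by
      intro p q hp hp' hq hq'
      refine (coeffs_eq_zero (a := M p q) (b := M i i * M p q - M i q * M p i) (c := 0)
        fun t => ?_).1
      have := hN t i i p q
      simp [hji, hp.symm, hp'.symm, hq.symm, hq'.symm] at this
      linear_combination this
    have hsymm : ∀ p q, M p q = M q p := by
      obtain ⟨w, hw⟩ := hw 1
      have hMw : M = vecMulVec w w - single i i 1 - single j j 1 := by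
        rw [← hw]
        module
      have hMs : Mᵀ = M := by
        rw [hMw]
        simp [transpose_sub, transpose_vecMulVec]
      intro p q
      exact congrFun (congrFun hMs q) p
    have hi : ∀ p, p ≠ i → p ≠ j → M i p = 0 := by
      intro p hp hp'
      have := (coeffs_eq_zero (a := M p p) (b := M i i * M p p - M i p * M p i) (c := 0)
        fun t => by
          have := hN t i i p p
          simp [hji, hp.symm, hp'.symm] at this
          linear_combination this).2.1
      rw [hoff p p hp hp' hp hp', hsymm p i] at this
      simpa using this
    have hj : ∀ p, p ≠ i → p ≠ j → M j p = 0 := by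
      intro p hp hp'
      have := (coeffs_eq_zero (a := 0) (b := M j j * M p p - M j p * M p j) (c := M p p)
        fun t => by
          have := hN t j j p p
          simp [hij, hp.symm, hp'.symm] at this
          linear_combination this).2.1
      rw [hoff p p hp hp' hp hp', hsymm p j] at this
      simpa using this
    have hc := coeffs_eq_zero (a := M j j) (b := 1 + M i i * M j j - M i j * M j i) (c := M i i)
        fun t => by
          have := hN t i i j j
          simp [hij, hji] at this
          linear_combination this
    rcases eq_or_ne a i with rfl | hai
    · rcases eq_or_ne b a with rfl | hba
      · exact hc.2.2
      · exact hi b hba (fun h => h1 ⟨rfl, h⟩)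
    rcases eq_or_ne a j with rfl | haj
    · rcases eq_or_ne b a with rfl | hba
      · exact hc.1
      · exact hj b (fun h => h2 ⟨rfl, h⟩) hba
    rcases eq_or_ne b i with rfl | hbi
    · rw [hsymm]; exact hi a hai haj
    rcases eq_or_ne b j with rfl | hbj
    · rw [hsymm]; exact hj a hai haj
    exact hoff a b hai haj hbi hbj
  have hM' : ∀ i j a b, ¬ (a = i ∧ b = j) → ¬ (a = j ∧ b = i) →
      ψ (single i j 1 + single j i 1) a b = 0 := by
    intro i j a b h1 h2
    rcases eq_or_ne i j with rfl | hij
    · rw [map_add, hdiag, Matrix.add_apply, single_apply, if_neg (fun h => h1 ⟨h.1.symm, h.2.symm⟩),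
        add_zero]
    · exact hM i j a b hij h1 h2
  have hsum : ∀ (S : Matrix (Fin n) (Fin n) k), S.IsSymm → ∀ a b,
      2 * ψ S a b = ∑ i, ∑ j, S i j * ψ (single i j 1 + single j i 1) a b := by
    intro S hS a b
    have h2S : (2 : k) • S = ∑ i, ∑ j, S i j • (single i j 1 + single j i 1) := by
      have e1 : S = ∑ i, ∑ j, S i j • single i j 1 := by
        conv_lhs => rw [matrix_eq_sum_single S]
        simp
      have e2 : S = ∑ i, ∑ j, S i j • single j i 1 := by
        rw [Finset.sum_comm]
        conv_lhs => rw [e1]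
        refine Finset.sum_congr rfl fun i _ => Finset.sum_congr rfl fun j _ => ?_
        rw [hS.apply]
      simp only [smul_add, Finset.sum_add_distrib]
      rw [← e1, ← e2, two_smul]
    have := congrFun (congrFun (congrArg ψ h2S) a) b
    simp only [map_smul, map_sum, Matrix.sum_apply, Matrix.smul_apply, smul_eq_mul] at this
    exact this
  obtain ⟨w, hw⟩ := hsq 1
  refine ⟨w, fun S hS => ?_⟩
  ext a b
  rw [mul_diagonal, diagonal_mul]
  apply mul_left_cancel₀ h2
  -- a nonzero term forces `{i, j} = {a, b}`, hence `S i j = S a b`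
  have hfac : 2 * ψ S a b = S a b * (2 * ψ (vecMulVec 1 1) a b) := by
    rw [hsum S hS, hsum _ (IsSymm_vecMulVec 1), Finset.mul_sum]
    refine Finset.sum_congr rfl fun i _ => ?_
    rw [Finset.mul_sum]
    refine Finset.sum_congr rfl fun j _ => ?_
    by_cases h1 : a = i ∧ b = j
    · simp [h1.1, h1.2, vecMulVec_apply]
    by_cases h2 : a = j ∧ b = i
    · simp [h2.1, h2.2, vecMulVec_apply, hS.apply]
    · simp [hM' i j a b h1 h2]
  rw [hfac, hw, vecMulVec_apply]
  ring

/-- A linear map that sends squares to squares and the identity to an invertible matrix is a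
congruence on symmetric matrices. -/
lemma square_preserver [Infinite k] (h2 : (2 : k) ≠ 0)
    (φ : Matrix (Fin n) (Fin n) k →ₗ[k] Matrix (Fin n) (Fin n) k)
    (hsq : ∀ v, ∃ w, φ (vecMulVec v v) = vecMulVec w w) (hone : (φ 1).det ≠ 0) :
    ∃ g : Matrix (Fin n) (Fin n) k, IsUnit g ∧
      ∀ S : Matrix (Fin n) (Fin n) k, S.IsSymm → φ S = gᵀ * S * g := by
  choose f hf using fun i : Fin n => hsq (Pi.single i 1)
  simp only [← single_eq_single_vecMulVec_single] at hf
  -- the rows `f i` of `F` are a basis, and congruence by `F⁻¹` normalizes `φ`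
  let F : Matrix (Fin n) (Fin n) k := of f
  have hφ1 : φ 1 = Fᵀ * F := by
    have : (1 : Matrix (Fin n) (Fin n) k) = ∑ i, single i i 1 := by
      ext a b
      rw [Matrix.sum_apply, Finset.sum_eq_single a (fun i _ hi => by simp [hi]) (by simp)]
      simp [single_apply, one_apply]
    rw [this, map_sum]
    ext a b
    simp [Matrix.sum_apply, hf, Matrix.mul_apply, vecMulVec_apply, F]
  have hF : IsUnit F.det := by
    rw [hφ1, det_mul] at hone
    exact (right_ne_zero_of_mul hone).isUnit
  have hFt : IsUnit Fᵀ.det := by simpa using hF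
  let ψ : Matrix (Fin n) (Fin n) k →ₗ[k] Matrix (Fin n) (Fin n) k :=
    (LinearMap.mulLeft k (Fᵀ)⁻¹) ∘ₗ (LinearMap.mulRight k F⁻¹) ∘ₗ φ
  have hψ : ∀ S, ψ S = (Fᵀ)⁻¹ * (φ S * F⁻¹) := fun S => rfl
  have hψsq : ∀ v w, φ (vecMulVec v v) = vecMulVec w w →
      ψ (vecMulVec v v) = vecMulVec ((Fᵀ)⁻¹ *ᵥ w) ((Fᵀ)⁻¹ *ᵥ w) := by
    intro v w hw
    rw [hψ, hw, vecMulVec_mul, mul_vecMulVec, ← transpose_nonsing_inv, mulVec_transpose]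
  have hψdiag : ∀ i, ψ (single i i 1) = single i i 1 := by
    intro i
    have hfi : (Fᵀ)⁻¹ *ᵥ f i = Pi.single i 1 := by
      have : f i = Fᵀ *ᵥ Pi.single i 1 := by
        ext a; simp [F]
      rw [this, mulVec_mulVec, nonsing_inv_mul _ hFt, one_mulVec]
    rw [single_eq_single_vecMulVec_single, hψsq _ (f i), hfi]
    rw [← single_eq_single_vecMulVec_single, hf]
  obtain ⟨w, hw⟩ := normalized_square_preserver h2 ψ
    (fun v => (hsq v).imp' _ (hψsq v)) hψdiag
  have hg : ∀ S : Matrix (Fin n) (Fin n) k, S.IsSymm →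
      φ S = (diagonal w * F)ᵀ * S * (diagonal w * F) := by
    intro S hS
    have h := hw S hS
    rw [hψ] at h
    have : φ S = Fᵀ * ((Fᵀ)⁻¹ * (φ S * F⁻¹)) * F := by
      rw [mul_nonsing_inv_cancel_left _ _ hFt, nonsing_inv_mul_cancel_right _ _ hF]
    rw [this, h]
    simp [transpose_mul, Matrix.mul_assoc]
  refine ⟨diagonal w * F, ?_, hg⟩
  rw [Matrix.isUnit_iff_isUnit_det, isUnit_iff_ne_zero]
  rw [hg 1 isSymm_one, det_mul] at hone
  exact right_ne_zero_of_mul hone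

/-- A linear bijection of the symmetric matrices that scales the determinant sends squares to
squares. -/
lemma map_square_of_det_preserver [IsAlgClosed k] (h2 : (2 : k) ≠ 0) {c : k}
    (φ : Matrix (Fin n) (Fin n) k →ₗ[k] Matrix (Fin n) (Fin n) k)
    (hsymm : ∀ S : Matrix (Fin n) (Fin n) k, S.IsSymm → (φ S).IsSymm)
    (hsurj : ∀ S' : Matrix (Fin n) (Fin n) k, S'.IsSymm → ∃ S, S.IsSymm ∧ φ S = S')
    (hdet : ∀ S : Matrix (Fin n) (Fin n) k, S.IsSymm → (φ S).det = c * S.det)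
    (v : Fin n → k) : ∃ w, φ (vecMulVec v v) = vecMulVec w w := by
  have := IsAlgClosed.instInfinite (K := k)
  obtain ⟨S', c', ρ, hS', hc', hpen, -, hsq⟩ :=
    exists_det_pencil_eq_monomial h2 _ (hsymm _ (IsSymm_vecMulVec v))
  obtain ⟨S, hS, rfl⟩ := hsurj S' hS'
  obtain ⟨a, b, hab⟩ := det_add_smul_vecMulVec_affine S v
  refine hsq (le_one_of_monomial_eq_affine (a := c * a) (b := c * b) hc' fun t => ?_)
  rw [← hpen, ← map_smul, ← map_add, hdet _ (hS.add ((IsSymm_vecMulVec v).smul t)), hab]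
  ring

/-- The determinant on symmetric matrices does not factor through a proper quotient. -/
lemma eq_zero_of_det_add [IsAlgClosed k] (h2 : (2 : k) ≠ 0) (T : Matrix (Fin n) (Fin n) k)
    (hT : T.IsSymm) (h : ∀ S : Matrix (Fin n) (Fin n) k, S.IsSymm → (S + T).det = S.det) :
    T = 0 := by
  obtain ⟨S, c, ρ, hS, hc, hpen, h0, -⟩ := exists_det_pencil_eq_monomial h2 T hT
  apply h0
  have e1 := hpen 1
  have e0 := hpen 0
  rw [one_smul, h S hS] at e1
  rw [zero_smul, add_zero, e1] at e0
  by_contra hρ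
  simp [zero_pow hρ, hc] at e0

/-! ### Reduction to linear preservers -/

lemma eval_genCharPoly {r : ℕ} (A : Fin (r + 1) → Matrix (Fin n) (Fin n) k)
    (x : Fin (r + 1) → k) :
    MvPolynomial.eval x (genCharPoly A) = (∑ i, x i • A i).det := by
  rw [genCharPoly, RingHom.map_det]
  congr 1
  ext a b
  simp [Matrix.sum_apply]

/-- A symmetric tuple spanning the symmetric matrices is determined up to equivalence by its
determinant, even up to a nonzero scalar. -/
lemma equivalent_of_span [IsAlgClosed k] (h2 : (2 : k) ≠ 0) {r : ℕ}
    (A B : Fin (r + 1) → Matrix (Fin n) (Fin n) k)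
    (hA : ∀ i, (A i).IsSymm) (hB : ∀ i, (B i).IsSymm)
    (hspan : ∀ S : Matrix (Fin n) (Fin n) k, S.IsSymm → ∃ x : Fin (r + 1) → k,
      ∑ i, x i • A i = S)
    {c : k} (hc : c ≠ 0) (hP : genCharPoly B = c • genCharPoly A) :
    ∃ g : Matrix (Fin n) (Fin n) k, IsUnit g ∧ ∀ i, B i = gᵀ * A i * g := by
  have := IsAlgClosed.instInfinite (K := k)
  let LA := Fintype.linearCombination k A
  let LB := Fintype.linearCombination k B
  have hLA : ∀ x, LA x = ∑ i, x i • A i := fun x => Fintype.linearCombination_apply k A x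
  have hLB : ∀ x, LB x = ∑ i, x i • B i := fun x => Fintype.linearCombination_apply k B x
  have hsum : ∀ (C : Fin (r + 1) → Matrix (Fin n) (Fin n) k), (∀ i, (C i).IsSymm) →
      ∀ x : Fin (r + 1) → k, (∑ i, x i • C i).IsSymm := by
    intro C hC x
    simp only [Matrix.IsSymm, transpose_sum, transpose_smul]
    exact Finset.sum_congr rfl fun i _ => by rw [hC i]
  have hAs : ∀ x, (LA x).IsSymm := fun x => hLA x ▸ hsum A hA x
  have hBs : ∀ x, (LB x).IsSymm := fun x => hLB x ▸ hsum B hB x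
  have hdet : ∀ x, (LB x).det = c * (LA x).det := by
    intro x
    rw [hLA, hLB, ← eval_genCharPoly, ← eval_genCharPoly, hP, MvPolynomial.smul_eval]
  have hsurjA : ∀ S : Matrix (Fin n) (Fin n) k, S.IsSymm → ∃ x, LA x = S := hspan
  have hker : LinearMap.ker LB ≤ LinearMap.ker LA := by
    intro x hx
    rw [LinearMap.mem_ker] at hx ⊢
    refine eq_zero_of_det_add h2 _ (hAs x) fun S hS => ?_
    obtain ⟨y, rfl⟩ := hsurjA S hS
    apply mul_left_cancel₀ hc
    rw [← map_add, ← hdet, ← hdet, map_add, hx, add_zero]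
  have hrange : LinearMap.range LB ≤ LinearMap.range LA := by
    rintro _ ⟨x, rfl⟩
    exact hsurjA _ (hBs x)
  -- rank–nullity turns the two inclusions into equalities
  have hnA := LinearMap.finrank_range_add_finrank_ker LA
  have hnB := LinearMap.finrank_range_add_finrank_ker LB
  have hle := Submodule.finrank_mono hker
  have hle' := Submodule.finrank_mono hrange
  have hkereq : LinearMap.ker LB = LinearMap.ker LA :=
    Submodule.eq_of_le_of_finrank_le hker (by omega)
  have hrangeeq : LinearMap.range LB = LinearMap.range LA :=
    Submodule.eq_of_le_of_finrank_le hrange (by omega)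
  -- `φ` is `LB ∘ LA⁻¹`, extended arbitrarily from symmetric matrices to all matrices
  obtain ⟨σ, hσ⟩ := LA.rangeRestrict.exists_rightInverse_of_surjective LA.range_rangeRestrict
  obtain ⟨φ, hφ⟩ := LinearMap.exists_extend (LB ∘ₗ σ)
  have hφL : ∀ x, φ (LA x) = LB x := by
    intro x
    have h1 : φ (LA x) = LB (σ (LA.rangeRestrict x)) :=
      LinearMap.congr_fun hφ (LA.rangeRestrict x)
    have h3 : LA (σ (LA.rangeRestrict x)) = LA x :=
      congrArg Subtype.val (LinearMap.congr_fun hσ (LA.rangeRestrict x))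
    have h4 : σ (LA.rangeRestrict x) - x ∈ LinearMap.ker LB := by
      rw [hkereq, LinearMap.mem_ker, map_sub, h3, sub_self]
    rw [h1, ← sub_eq_zero, ← map_sub]
    exact h4
  have hφdet : ∀ S : Matrix (Fin n) (Fin n) k, S.IsSymm → (φ S).det = c * S.det := by
    intro S hS
    obtain ⟨x, rfl⟩ := hsurjA S hS
    rw [hφL, hdet]
  obtain ⟨g, hg, hgS⟩ := square_preserver h2 φ
    (map_square_of_det_preserver h2 φ
      (fun S hS => by
        obtain ⟨x, rfl⟩ := hsurjA S hS
        rw [hφL]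
        exact hBs x)
      (fun S' hS' => by
        have : S' ∈ LinearMap.range LB := hrangeeq ▸ hsurjA S' hS'
        obtain ⟨x, rfl⟩ := this
        exact ⟨LA x, hAs x, hφL x⟩) hφdet)
    (by rw [hφdet 1 isSymm_one]; simpa using hc)
  refine ⟨g, hg, fun i => ?_⟩
  rw [← hgS _ (hA i)]
  have h := hφL (Pi.single i 1)
  simpa [LA, LB, Fintype.linearCombination_apply_single] using h.symm

/-! ### The spanning condition as a nonvanishing minor -/

lemma card_upper_triangle (n : ℕ) :
    2 * Fintype.card {p : Fin n × Fin n // p.1 ≤ p.2} = n * (n + 1) := by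
  rw [← Fintype.card_congr (Sym2.sortEquiv (α := Fin n)), Sym2.card, Fintype.card_fin,
    Nat.choose_two_right, Nat.mul_div_cancel' (Nat.even_mul_pred_self (n + 1)).two_dvd]
  simp [mul_comm]

/-- If the upper triangular entries of the matrices `A (e p)` form an invertible matrix, then the
tuple `A` spans the symmetric matrices. -/
lemma span_of_det_ne_zero {r : ℕ} (A : Fin (r + 1) → Matrix (Fin n) (Fin n) k)
    (hA : ∀ i, (A i).IsSymm) (e : {p : Fin n × Fin n // p.1 ≤ p.2} ↪ Fin (r + 1))
    (hdet : (Matrix.of fun p q : {p : Fin n × Fin n // p.1 ≤ p.2} =>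
      A (e p) q.1.1 q.1.2).det ≠ 0)
    (S : Matrix (Fin n) (Fin n) k) (hS : S.IsSymm) :
    ∃ x : Fin (r + 1) → k, ∑ i, x i • A i = S := by
  classical
  set M := Matrix.of fun p q : {p : Fin n × Fin n // p.1 ≤ p.2} => A (e p) q.1.1 q.1.2 with hM
  let y : {p : Fin n × Fin n // p.1 ≤ p.2} → k := (fun q => S q.1.1 q.1.2) ᵥ* M⁻¹
  have hy : y ᵥ* M = fun q => S q.1.1 q.1.2 := by
    simp only [y]
    rw [vecMul_vecMul, nonsing_inv_mul _ hdet.isUnit, vecMul_one]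
  refine ⟨∑ p, y p • Pi.single (e p) 1, ?_⟩
  have hx : ∑ i, (∑ p, y p • Pi.single (e p) 1 : Fin (r + 1) → k) i • A i
      = ∑ p, y p • A (e p) := by
    rw [← Fintype.linearCombination_apply k A, map_sum]
    simp [Fintype.linearCombination_apply_single]
  rw [hx]
  have hle : ∀ a b, a ≤ b → (∑ p, y p • A (e p)) a b = S a b := by
    intro a b hab
    have := congrFun hy ⟨(a, b), hab⟩
    simpa [vecMul, dotProduct, hM, Matrix.sum_apply] using this
  have hsymm : (∑ p, y p • A (e p)).IsSymm := by
    simp only [Matrix.IsSymm, transpose_sum, transpose_smul]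
    exact Finset.sum_congr rfl fun p _ => by rw [hA]
  ext a b
  rcases le_total a b with h | h
  · exact hle a b h
  · rw [← hsymm.apply, hle b a h, hS.apply]

end Helpers

/-- **Proposition 5.1.** Let `k` be algebraically closed of characteristic `≠ 2`, `n ≥ 2`,
and `r ≥ n(n+1)/2 − 1` (encoded by `n(n+1) ≤ 2(r+1)`). Then `μ(r,n) = 1`: there is a dense
Zariski-open subset of `(Symm_n)^{r+1}` — encoded as the nonvanishing locus, within the space
of symmetric tuples, of a polynomial `f` on the matrix entries that does not vanish
identically on symmetric tuples — such that for every symmetric tuple `A` in this locus,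
every symmetric tuple `B` whose generalized characteristic polynomial is a nonzero scalar
multiple of that of `A` is equivalent to `A`: `Bᵢ = gᵀ Aᵢ g` for all `i`, for some invertible
`g`. -/
theorem mu_eq_one_of_large_r
    (k : Type*) [Field k] [IsAlgClosed k] (hk : ringChar k ≠ 2)
    (n r : ℕ) (hn : 2 ≤ n) (hr : n * (n + 1) ≤ 2 * (r + 1)) :
    ∃ f : MvPolynomial (Fin (r + 1) × Fin n × Fin n) k,
      (∃ A : Fin (r + 1) → Matrix (Fin n) (Fin n) k, (∀ i, (A i).IsSymm) ∧
        MvPolynomial.eval (fun p => A p.1 p.2.1 p.2.2) f ≠ 0) ∧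
      ∀ A : Fin (r + 1) → Matrix (Fin n) (Fin n) k, (∀ i, (A i).IsSymm) →
        MvPolynomial.eval (fun p => A p.1 p.2.1 p.2.2) f ≠ 0 →
        ∀ B : Fin (r + 1) → Matrix (Fin n) (Fin n) k, (∀ i, (B i).IsSymm) →
          (∃ c : k, c ≠ 0 ∧ genCharPoly B = c • genCharPoly A) →
          ∃ g : Matrix (Fin n) (Fin n) k, IsUnit g ∧ ∀ i, B i = gᵀ * A i * g := by
  have h2 : (2 : k) ≠ 0 := Ring.two_ne_zero hk
  obtain ⟨e⟩ : Nonempty ({p : Fin n × Fin n // p.1 ≤ p.2} ↪ Fin (r + 1)) := by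
    apply Function.Embedding.nonempty_of_card_le
    have := card_upper_triangle n
    rw [Fintype.card_fin]
    omega
  let f : MvPolynomial (Fin (r + 1) × Fin n × Fin n) k :=
    (Matrix.of fun p q : {p : Fin n × Fin n // p.1 ≤ p.2} =>
      (MvPolynomial.X (e p, q.1.1, q.1.2) : MvPolynomial (Fin (r + 1) × Fin n × Fin n) k)).det
  have hf : ∀ A : Fin (r + 1) → Matrix (Fin n) (Fin n) k,
      MvPolynomial.eval (fun p => A p.1 p.2.1 p.2.2) f =
        (Matrix.of fun p q : {p : Fin n × Fin n // p.1 ≤ p.2} => A (e p) q.1.1 q.1.2).det := by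
    intro A
    simp only [f]
    rw [RingHom.map_det]
    congr 1
    ext p q
    simp
  refine ⟨f, ?_, ?_⟩
  · -- the tuple of elementary symmetric matrices, for which the minor is the identity
    let E : {p : Fin n × Fin n // p.1 ≤ p.2} → Matrix (Fin n) (Fin n) k := fun p =>
      Matrix.of fun a b => if p.1 = (min a b, max a b) then 1 else 0
    refine ⟨Function.extend e E 0, fun i => ?_, ?_⟩
    · by_cases hi : ∃ p, e p = i
      · obtain ⟨p, rfl⟩ := hi
        rw [e.injective.extend_apply]
        ext a b
        simp [E, min_comm, max_comm]
      · rw [Function.extend_apply' _ _ _ hi]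
        exact isSymm_zero
    · rw [hf]
      have : (Matrix.of fun p q : {p : Fin n × Fin n // p.1 ≤ p.2} =>
          Function.extend e E 0 (e p) q.1.1 q.1.2) = 1 := by
        ext p q
        simp only [of_apply, e.injective.extend_apply, E, min_eq_left q.2, max_eq_right q.2,
          one_apply, Subtype.ext_iff]
      rw [this, det_one]
      exact one_ne_zero
  · rintro A hA hfA B hB ⟨c, hc, hP⟩
    rw [hf] at hfA
    exact equivalent_of_span h2 A B hA hB (span_of_det_ne_zero A hA e hfA) hc hP
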